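/- Let f : [0,∞) → ℝ be convex with f(1) = 0 and let G : [0,∞) → [0,∞) be increasing, convex, with G(0) = 0; assume (G,f) is information-subadditive. Let W be a channel from a finite set 𝒳 to a finite set 𝒴, let n ≥ 1, and let 𝓜 be a finite set with |𝓜| ≥ 2. Suppose a joint pmf on 𝓜 × 𝒳ⁿ × 𝒴ⁿ × 𝓜 factorizes as p(m, xⁿ, yⁿ, m̂) = p_M(m) · p_{Xⁿ|M}(xⁿ|m) · ∏_{i=1}^n W(y_i|x_i) · p_{M̂|Yⁿ}(m̂|yⁿ), where p_M is uniform on 𝓜, and let ε = Pr(M ≠ M̂). Then n · sup_{p_X} I_{G,f}(p_X, W) ≥ G( (1/|𝓜|)·f(|𝓜|(1−ε)) + ((|𝓜|−1)/|𝓜|)·f(|𝓜|ε/(|𝓜|−1)) ), where the supremum is over pmfs p_X on 𝒳. -/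

import Mathlib

open scoped BigOperators

/-- A probability mass function on a finite type: nonnegative and summing to 1. -/
def IsPMF {X : Type*} [Fintype X] (p : X → ℝ) : Prop :=
  (∀ x, 0 ≤ p x) ∧ ∑ x, p x = 1

/-- Absolute continuity `p ≪ q`: `q x = 0` implies `p x = 0`. -/
def AbsCont {X : Type*} (p q : X → ℝ) : Prop :=
  ∀ x, q x = 0 → p x = 0

/-- The f-divergence `D_f(p‖q) = ∑_{x : q(x) > 0} q(x) f(p(x)/q(x))`. -/
noncomputable def fDiv {X : Type*} [Fintype X] (f : ℝ → ℝ) (p q : X → ℝ) : ℝ :=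
  ∑ x, if 0 < q x then q x * f (p x / q x) else 0

/-- `D_m(f) = f 0 + lim_{t→∞} f t / t`, as an extended real.  For a convex `f`
with `f 1 = 0` the limit equals the supremum of the slopes `f t / (t-1)` over `t > 1`. -/
noncomputable def Dm (f : ℝ → ℝ) : EReal :=
  (f 0 : EReal) + ⨆ t : {t : ℝ // 1 < t}, ((f t.1 / (t.1 - 1) : ℝ) : EReal)

/-- An admissible pair `(G, f)`: `f` is convex on `[0,∞)` with `f 1 = 0`, and
`G : [0, D_m(f)) → [0,∞)` is non-decreasing with `G 0 = 0`. -/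
def Admissible (G f : ℝ → ℝ) : Prop :=
  ConvexOn ℝ (Set.Ici 0) f ∧ f 1 = 0 ∧ G 0 = 0 ∧
    (∀ a b : ℝ, 0 ≤ a → a ≤ b → (b : EReal) < Dm f → G a ≤ G b) ∧
    (∀ a : ℝ, 0 ≤ a → (a : EReal) < Dm f → 0 ≤ G a)

/-- The `(G,f)`-information `I_{G,f}(p_X, p_{Y|X})`: the infimum over output pmfs
`q_Y` (with `p_{Y|X=x} ≪ q_Y` for all `x`) of `∑_x p_X x • G (D_f(p_{Y|X=x}‖q_Y))`. -/
noncomputable def Igf {X Y : Type*} [Fintype X] [Fintype Y]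
    (G f : ℝ → ℝ) (pX : X → ℝ) (W : X → Y → ℝ) : ℝ :=
  sInf {v : ℝ | ∃ qY : Y → ℝ, IsPMF qY ∧ (∀ x, AbsCont (W x) qY) ∧
    v = ∑ x, pX x * G (fDiv f (W x) qY)}

/-- `(G,f)` is information-subadditive: for every pmf `p_X` and channels
`p_{Y|X}`, `p_{Z|X}` (so that `Y → X → Z` is a Markov chain),
`I_{G,f}(X;YZ) ≤ I_{G,f}(X;Y) + I_{G,f}(X;Z)`. -/
def InfoSubadditive (G f : ℝ → ℝ) : Prop :=
  ∀ (X Y Z : Type) [Fintype X] [Fintype Y] [Fintype Z]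
    (pX : X → ℝ) (W : X → Y → ℝ) (V : X → Z → ℝ),
    IsPMF pX → (∀ x, IsPMF (W x)) → (∀ x, IsPMF (V x)) →
    Igf G f pX (fun x (p : Y × Z) => W x p.1 * V x p.2) ≤
      Igf G f pX W + Igf G f pX V

/-!
A uniform message `M` is encoded as `X`, sent through an arbitrary block channel `K` with output
`Y`, and decoded as `M̂`. Compare the true law of `(M, X, Y, M̂)` with the law in which `Y` is
drawn from a fixed `q` independently of the input: under the latter the decoder succeeds with
probability exactly `1/|𝓜|`, under the former with probability `1 - ε`. The `f`-divergence of the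
two laws is the average over the inputs of `D_f(K(·|x)‖q)`, and observing only whether decoding
succeeded does not increase it. Jensen's inequality for `G` and the infimum over `q` bound `G` of
the binary divergence by the `(G,f)`-information of the block channel. When that channel is a
product, subadditivity and passing to the law of a single channel input bound this information by
the sum of the capacities.
-/

section PMF

variable {A B X Y : Type*} [Fintype A] [Fintype B] [Fintype X] [Fintype Y]

lemma IsPMF.nonempty {p : X → ℝ} (hp : IsPMF p) : Nonempty X := by
  by_contra hX
  rw [not_nonempty_iff] at hX
  simpa using hp.2

lemma IsPMF.le_one {p : X → ℝ} (hp : IsPMF p) (x : X) : p x ≤ 1 :=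
  hp.2 ▸ Finset.single_le_sum (fun i _ => hp.1 i) (Finset.mem_univ x)

lemma isPMF_comp_equiv_iff (e : X ≃ Y) {p : Y → ℝ} : IsPMF (p ∘ e) ↔ IsPMF p := by
  simp only [IsPMF, Function.comp_apply, e.forall_congr_left, e.apply_symm_apply, e.sum_comp p]

lemma isPMF_pi {ι : Type*} [Fintype ι] [DecidableEq ι] {Z : ι → Type*} [∀ i, Fintype (Z i)]
    {p : ∀ i, Z i → ℝ} (hp : ∀ i, IsPMF (p i)) : IsPMF fun z : ∀ i, Z i => ∏ i, p i (z i) :=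
  ⟨fun _ => Finset.prod_nonneg fun i _ => (hp i).1 _, by simp [← Fintype.prod_sum, (hp _).2]⟩

/-- The uniform probability mass function on `X`. -/
noncomputable def uniformPMF (X : Type*) [Fintype X] : X → ℝ := fun _ => 1 / Fintype.card X

lemma isPMF_uniformPMF [Nonempty X] : IsPMF (uniformPMF X) :=
  ⟨fun _ => by unfold uniformPMF; positivity, by simp [uniformPMF]⟩

lemma absCont_uniformPMF [Nonempty X] (p : X → ℝ) : AbsCont p (uniformPMF X) := fun x hx =>
  absurd hx (by unfold uniformPMF; positivity)

/-- The joint law of an input with law `p` and the output of the channel `K` fed with it. -/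
def jointPMF {A B : Type*} (p : A → ℝ) (K : A → B → ℝ) : A × B → ℝ := fun z => p z.1 * K z.1 z.2

lemma jointPMF_nonneg {A B : Type*} {p : A → ℝ} {K : A → B → ℝ} (hp : ∀ a, 0 ≤ p a)
    (hK : ∀ a b, 0 ≤ K a b) (z : A × B) : 0 ≤ jointPMF p K z :=
  mul_nonneg (hp _) (hK _ _)

lemma IsPMF.joint {p : A → ℝ} {K : A → B → ℝ} (hp : IsPMF p) (hK : ∀ a, IsPMF (K a)) :
    IsPMF (jointPMF p K) := by
  refine ⟨jointPMF_nonneg hp.1 fun a => (hK a).1, ?_⟩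
  simp only [jointPMF, Fintype.sum_prod_type, ← Finset.mul_sum, (hK _).2, mul_one, hp.2]

lemma AbsCont.refl {X : Type*} (p : X → ℝ) : AbsCont p p := fun _ h => h

lemma AbsCont.joint {A B : Type*} {p q : A → ℝ} {K L : A → B → ℝ} (hpq : AbsCont p q)
    (hKL : ∀ a, AbsCont (K a) (L a)) : AbsCont (jointPMF p K) (jointPMF q L) := fun _ hz =>
  mul_eq_zero.mpr ((mul_eq_zero.mp hz).imp (hpq _) (hKL _ _))

/-- The law of `φ x` when `x` has law `p`. -/
def pushforward [DecidableEq Y] (φ : X → Y) (p : X → ℝ) : Y → ℝ := fun y => ∑ x with φ x = y, p x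

lemma pushforward_nonneg {X Y : Type*} [Fintype X] [DecidableEq Y] {p : X → ℝ}
    (hp : ∀ x, 0 ≤ p x) (φ : X → Y) (y : Y) : 0 ≤ pushforward φ p y :=
  Finset.sum_nonneg fun x _ => hp x

lemma AbsCont.pushforward {X Y : Type*} [Fintype X] [DecidableEq Y] {p q : X → ℝ}
    (hq : ∀ x, 0 ≤ q x) (hpq : AbsCont p q) (φ : X → Y) :
    AbsCont (pushforward φ p) (pushforward φ q) := fun _ hy =>
  Finset.sum_eq_zero fun x hx =>
    hpq x ((Finset.sum_eq_zero_iff_of_nonneg fun x _ => hq x).mp hy x hx)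

variable [DecidableEq Y]

lemma sum_pushforward_mul (φ : X → Y) (p : X → ℝ) (g : Y → ℝ) :
    ∑ y, pushforward φ p y * g y = ∑ x, p x * g (φ x) := by
  rw [← Finset.sum_fiberwise _ φ]
  refine Finset.sum_congr rfl fun y _ => ?_
  rw [pushforward, Finset.sum_mul]
  exact Finset.sum_congr rfl fun x hx => by rw [(Finset.mem_filter.mp hx).2]

lemma IsPMF.pushforward {p : X → ℝ} (hp : IsPMF p) (φ : X → Y) : IsPMF (pushforward φ p) :=
  ⟨pushforward_nonneg hp.1 φ, by
    simpa [hp.2] using sum_pushforward_mul φ p fun _ => 1⟩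

end PMF

section FDivergence

variable {A B X Y : Type*} [Fintype A] [Fintype B] [Fintype X] [Fintype Y] {f : ℝ → ℝ}

lemma fDiv_eq_sum {q : X → ℝ} (hq : ∀ x, 0 ≤ q x) (f : ℝ → ℝ) (p : X → ℝ) :
    fDiv f p q = ∑ x, q x * f (p x / q x) := by
  refine Finset.sum_congr rfl fun x _ => ?_
  rcases (hq x).eq_or_lt with hx | hx
  · simp [← hx]
  · exact if_pos hx

lemma fDiv_comp_equiv (f : ℝ → ℝ) (e : X ≃ Y) (p q : Y → ℝ) :
    fDiv f (p ∘ e) (q ∘ e) = fDiv f p q :=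
  e.sum_comp fun y => if 0 < q y then q y * f (p y / q y) else 0

lemma sum_mul_map_div_sum_le {ι : Type*} (hf : ConvexOn ℝ (Set.Ici 0) f) (s : Finset ι)
    {p q : ι → ℝ} (hp : ∀ i, 0 ≤ p i) (hq : ∀ i, 0 ≤ q i) (hpq : AbsCont p q) :
    (∑ i ∈ s, q i) * f ((∑ i ∈ s, p i) / ∑ i ∈ s, q i) ≤ ∑ i ∈ s, q i * f (p i / q i) := by
  rcases (Finset.sum_nonneg fun i (_ : i ∈ s) => hq i).eq_or_lt with h0 | hpos
  · have hzero := (Finset.sum_eq_zero_iff_of_nonneg fun i _ => hq i).mp h0.symm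
    rw [← h0, zero_mul, Finset.sum_eq_zero fun i hi => by rw [hzero i hi, zero_mul]]
  · have hcancel (i : ι) : q i * (p i / q i) = p i := mul_div_cancel_of_imp' (hpq i)
    have jensen := hf.map_centerMass_le (t := s) (w := q) (p := fun i => p i / q i)
      (fun i _ => hq i) hpos fun i _ => div_nonneg (hp i) (hq i)
    simp only [Finset.centerMass, smul_eq_mul, Function.comp_apply, hcancel] at jensen
    rwa [inv_mul_eq_div, inv_mul_eq_div, le_div_iff₀' hpos] at jensen

lemma fDiv_nonneg (hf : ConvexOn ℝ (Set.Ici 0) f) (hf1 : f 1 = 0) {p q : X → ℝ}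
    (hp : IsPMF p) (hq : IsPMF q) (hpq : AbsCont p q) : 0 ≤ fDiv f p q := by
  have h := sum_mul_map_div_sum_le hf Finset.univ hp.1 hq.1 hpq
  rwa [hp.2, hq.2, div_one, hf1, mul_zero, ← fDiv_eq_sum hq.1] at h

lemma fDiv_pushforward_le [DecidableEq Y] (hf : ConvexOn ℝ (Set.Ici 0) f) {p q : X → ℝ}
    (hp : ∀ x, 0 ≤ p x) (hq : ∀ x, 0 ≤ q x) (hpq : AbsCont p q) (φ : X → Y) :
    fDiv f (pushforward φ p) (pushforward φ q) ≤ fDiv f p q := by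
  rw [fDiv_eq_sum hq, fDiv_eq_sum (pushforward_nonneg hq φ),
    ← Finset.sum_fiberwise _ φ]
  exact Finset.sum_le_sum fun _ _ => sum_mul_map_div_sum_le hf _ hp hq hpq

lemma fDiv_jointPMF_left {p : A → ℝ} (hp : ∀ a, 0 ≤ p a) {L : A → B → ℝ} (hL : ∀ a b, 0 ≤ L a b)
    (f : ℝ → ℝ) (K : A → B → ℝ) :
    fDiv f (jointPMF p K) (jointPMF p L) = ∑ a, p a * fDiv f (K a) (L a) := by
  rw [fDiv_eq_sum (jointPMF_nonneg hp hL), Fintype.sum_prod_type]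
  refine Finset.sum_congr rfl fun a _ => ?_
  rw [fDiv_eq_sum (hL a), Finset.mul_sum]
  refine Finset.sum_congr rfl fun b _ => ?_
  rcases eq_or_ne (p a) 0 with ha | ha
  · simp [jointPMF, ha]
  · simp only [jointPMF, mul_div_mul_left _ _ ha, mul_assoc]

lemma fDiv_jointPMF_right {q : A → ℝ} (hq : ∀ a, 0 ≤ q a) {K : A → B → ℝ} (hK : ∀ a, IsPMF (K a))
    (f : ℝ → ℝ) (p : A → ℝ) : fDiv f (jointPMF p K) (jointPMF q K) = fDiv f p q := by
  rw [fDiv_eq_sum (jointPMF_nonneg hq fun a => (hK a).1), Fintype.sum_prod_type, fDiv_eq_sum hq]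
  refine Finset.sum_congr rfl fun a _ => ?_
  have hterm (b : B) : jointPMF q K (a, b) * f (jointPMF p K (a, b) / jointPMF q K (a, b)) =
      q a * f (p a / q a) * K a b := by
    rcases eq_or_ne (K a b) 0 with hb | hb
    · simp [jointPMF, hb]
    · simp only [jointPMF, mul_div_mul_right _ _ hb, mul_right_comm]
  rw [Finset.sum_congr rfl fun b _ => hterm b, ← Finset.mul_sum, (hK a).2, mul_one]

lemma fDiv_bool_eq {r s : Bool → ℝ} (hr : IsPMF r) (hs : IsPMF s) {N : ℝ} (hN : N ≠ 0)
    (hsN : s true = 1 / N) (f : ℝ → ℝ) :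
    fDiv f r s = 1 / N * f (N * (1 - r false)) + (N - 1) / N * f (N * r false / (N - 1)) := by
  have hr_true : r true = 1 - r false := by linarith [Fintype.sum_bool r, hr.2]
  have hs_false : s false = (N - 1) / N := by
    rw [sub_div, div_self hN]
    linarith [Fintype.sum_bool s, hs.2]
  rw [fDiv_eq_sum hs.1, Fintype.sum_bool, hr_true, hs_false, hsN, div_div_eq_mul_div, div_one,
    div_div_eq_mul_div, mul_comm N, mul_comm N]

end FDivergence

section Information

variable {A B X Y Z : Type*} [Fintype A] [Fintype B] [Fintype X] [Fintype Y] [Fintype Z]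
  {G f : ℝ → ℝ}

lemma Igf_le (hf : ConvexOn ℝ (Set.Ici 0) f) (hf1 : f 1 = 0) (hG : ∀ t ∈ Set.Ici (0 : ℝ), 0 ≤ G t)
    {p : X → ℝ} (hp : IsPMF p) {W : X → Y → ℝ} (hW : ∀ x, IsPMF (W x)) {q : Y → ℝ}
    (hq : IsPMF q) (hWq : ∀ x, AbsCont (W x) q) :
    Igf G f p W ≤ ∑ x, p x * G (fDiv f (W x) q) := by
  refine csInf_le ⟨0, ?_⟩ ⟨q, hq, hWq, rfl⟩
  rintro _ ⟨q', hq', hWq', rfl⟩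
  exact Finset.sum_nonneg fun x _ =>
    mul_nonneg (hp.1 x) (hG _ (fDiv_nonneg hf hf1 (hW x) hq' (hWq' x)))

lemma le_Igf [Nonempty Y] {p : X → ℝ} {W : X → Y → ℝ} {c : ℝ}
    (h : ∀ q, IsPMF q → (∀ x, AbsCont (W x) q) → c ≤ ∑ x, p x * G (fDiv f (W x) q)) :
    c ≤ Igf G f p W := by
  refine le_csInf ⟨_, _, isPMF_uniformPMF, fun x => absCont_uniformPMF (W x), rfl⟩ ?_
  rintro _ ⟨q, hq, hWq, rfl⟩
  exact h q hq hWq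

lemma Igf_comp_equiv (G f : ℝ → ℝ) (e : X ≃ A) (e' : Y ≃ B) (p : A → ℝ) (W : A → B → ℝ) :
    Igf G f (p ∘ e) (fun x => W (e x) ∘ e') = Igf G f p W := by
  have hac (q : B → ℝ) :
      (∀ x, AbsCont (W (e x) ∘ e') (q ∘ e')) ↔ ∀ a, AbsCont (W a) q := by
    simp only [AbsCont, Function.comp_apply, e.forall_congr_left, e'.forall_congr_left,
      Equiv.apply_symm_apply]
  have hsum (q : B → ℝ) : ∑ x, (p ∘ e) x * G (fDiv f (W (e x) ∘ e') (q ∘ e')) =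
      ∑ a, p a * G (fDiv f (W a) q) := by
    simp only [fDiv_comp_equiv, Function.comp_apply, e.sum_comp fun a => p a * G (fDiv f (W a) q)]
  have hsurj : Function.Surjective fun q : B → ℝ => q ∘ e' :=
    e'.injective.surjective_comp_right
  simp only [Igf, hsurj.exists, isPMF_comp_equiv_iff, hac, hsum]

-- Only an inequality: on the left, `q` need not dominate `W x` for `x` outside the range of `φ`.
lemma Igf_comp_le_Igf_pushforward [DecidableEq X] (hf : ConvexOn ℝ (Set.Ici 0) f) (hf1 : f 1 = 0)
    (hG : ∀ t ∈ Set.Ici (0 : ℝ), 0 ≤ G t) {p : A → ℝ} (hp : IsPMF p) {W : X → Y → ℝ}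
    (hW : ∀ x, IsPMF (W x)) (φ : A → X) :
    Igf G f p (fun a => W (φ a)) ≤ Igf G f (pushforward φ p) W := by
  have : Nonempty Y := hp.nonempty.elim fun a => (hW (φ a)).nonempty
  refine le_Igf fun q hq hWq => ?_
  rw [sum_pushforward_mul]
  exact Igf_le hf hf1 hG hp (fun a => hW (φ a)) hq fun a => hWq (φ a)

lemma InfoSubadditive.Igf_prod_le (hsub : InfoSubadditive G f) {p : X → ℝ} (hp : IsPMF p)
    {W : X → Y → ℝ} (hW : ∀ x, IsPMF (W x)) {V : X → Z → ℝ} (hV : ∀ x, IsPMF (V x)) :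
    Igf G f p (fun x (z : Y × Z) => W x z.1 * V x z.2) ≤ Igf G f p W + Igf G f p V := by
  -- `InfoSubadditive` quantifies over `Type` only; transport to `Fin` reaches every universe.
  let eX := (Fintype.equivFin X).symm
  let eY := (Fintype.equivFin Y).symm
  let eZ := (Fintype.equivFin Z).symm
  have h := hsub _ _ _ (p ∘ eX) (fun x => W (eX x) ∘ eY) (fun x => V (eX x) ∘ eZ)
    ((isPMF_comp_equiv_iff eX).mpr hp) (fun x => (isPMF_comp_equiv_iff eY).mpr (hW _))
    (fun x => (isPMF_comp_equiv_iff eZ).mpr (hV _))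
  rw [Igf_comp_equiv, Igf_comp_equiv] at h
  rwa [← Igf_comp_equiv G f eX (eY.prodCongr eZ)]

lemma InfoSubadditive.Igf_pi_le (hsub : InfoSubadditive G f) (hf : ConvexOn ℝ (Set.Ici 0) f)
    (hf1 : f 1 = 0) (hG0 : G 0 = 0) (hG : ∀ t ∈ Set.Ici (0 : ℝ), 0 ≤ G t) {p : A → ℝ}
    (hp : IsPMF p) {n : ℕ} {Y : Fin n → Type*} [∀ i, Fintype (Y i)] {V : ∀ i, A → Y i → ℝ}
    (hV : ∀ i a, IsPMF (V i a)) :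
    Igf G f p (fun a (y : ∀ i, Y i) => ∏ i, V i a (y i)) ≤ ∑ i, Igf G f p (V i) := by
  induction n with
  | zero =>
    refine (Igf_le hf hf1 hG hp (fun a => isPMF_pi fun i => hV i a) isPMF_uniformPMF
      fun _ => absCont_uniformPMF _).trans_eq ?_
    simp [fDiv, uniformPMF, hf1, hG0]
  | succ n ih =>
    let tailChannel : A → (∀ i : Fin n, Y i.succ) → ℝ := fun a y => ∏ i, V i.succ a (y i)
    calc Igf G f p (fun a (y : ∀ i, Y i) => ∏ i, V i a (y i))
        = Igf G f p (fun a (z : Y 0 × ∀ i : Fin n, Y i.succ) =>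
            V 0 a z.1 * tailChannel a z.2) := by
          rw [← Igf_comp_equiv G f (Equiv.refl A) (Fin.consEquiv Y)]
          simp [tailChannel, Function.comp_def, Fin.prod_univ_succ]
      _ ≤ Igf G f p (V 0) + Igf G f p tailChannel :=
          hsub.Igf_prod_le hp (hV 0) fun a => isPMF_pi fun i => hV i.succ a
      _ ≤ Igf G f p (V 0) + ∑ i : Fin n, Igf G f p (V i.succ) := by
          gcongr
          exact ih fun i => hV i.succ
      _ = ∑ i, Igf G f p (V i) := (Fin.sum_univ_succ fun i => Igf G f p (V i)).symm

/-- The `(G,f)`-capacity of a channel `W`: the supremum of its `(G,f)`-information over all input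
laws. -/
noncomputable def gfCapacity (G f : ℝ → ℝ) (W : X → Y → ℝ) : ℝ :=
  sSup {v : ℝ | ∃ p : X → ℝ, IsPMF p ∧ v = Igf G f p W}

lemma Igf_le_gfCapacity (hf : ConvexOn ℝ (Set.Ici 0) f) (hf1 : f 1 = 0)
    (hG : ∀ t ∈ Set.Ici (0 : ℝ), 0 ≤ G t) {p : X → ℝ} (hp : IsPMF p) {W : X → Y → ℝ}
    (hW : ∀ x, IsPMF (W x)) : Igf G f p W ≤ gfCapacity G f W := by
  have : Nonempty Y := hp.nonempty.elim fun x => (hW x).nonempty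
  refine le_csSup ⟨∑ x, G (fDiv f (W x) (uniformPMF Y)), ?_⟩ ⟨p, hp, rfl⟩
  rintro _ ⟨p', hp', rfl⟩
  have hWu (x : X) : AbsCont (W x) (uniformPMF Y) := absCont_uniformPMF _
  refine (Igf_le hf hf1 hG hp' hW isPMF_uniformPMF hWu).trans (Finset.sum_le_sum fun x _ => ?_)
  exact mul_le_of_le_one_left (hG _ (fDiv_nonneg hf hf1 (hW x) isPMF_uniformPMF (hWu x)))
    (hp'.le_one x)

end Information

section Codes

variable {A B M : Type*} [Fintype A] [Fintype B] [Fintype M] {G f : ℝ → ℝ}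

/-- The law of `(((m, x), y), m̂)` when a uniform message `m` is encoded by the stochastic encoder
`enc` as `x`, sent through the channel `K` and decoded by the stochastic decoder `dec`. -/
noncomputable def codeLaw (enc : M → A → ℝ) (K : A → B → ℝ) (dec : B → M → ℝ) :
    ((M × A) × B) × M → ℝ :=
  jointPMF (jointPMF (jointPMF (uniformPMF M) enc) fun z => K z.2) fun z => dec z.2

lemma isPMF_codeLaw [Nonempty M] {enc : M → A → ℝ} (henc : ∀ m, IsPMF (enc m)) {K : A → B → ℝ}
    (hK : ∀ a, IsPMF (K a)) {dec : B → M → ℝ} (hdec : ∀ b, IsPMF (dec b)) :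
    IsPMF (codeLaw enc K dec) :=
  ((isPMF_uniformPMF.joint henc).joint fun _ => hK _).joint fun _ => hdec _

lemma fDiv_codeLaw [Nonempty M] {enc : M → A → ℝ} (henc : ∀ m, IsPMF (enc m)) {L : A → B → ℝ}
    (hL : ∀ a, IsPMF (L a)) {dec : B → M → ℝ} (hdec : ∀ b, IsPMF (dec b)) (f : ℝ → ℝ)
    (K : A → B → ℝ) :
    fDiv f (codeLaw enc K dec) (codeLaw enc L dec) =
      ∑ z, jointPMF (uniformPMF M) enc z * fDiv f (K z.2) (L z.2) := by
  have hinput := isPMF_uniformPMF.joint henc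
  rw [codeLaw, codeLaw, fDiv_jointPMF_right (hinput.joint fun _ => hL _).1 fun _ => hdec _,
    fDiv_jointPMF_left hinput.1 fun _ => (hL _).1]

variable [DecidableEq M]

/-- The event that the decoded message is the message sent. -/
def isDecoded (z : ((M × A) × B) × M) : Bool := decide (z.2 = z.1.1.1)

/-- The probability that the decoded message differs from the message sent. -/
noncomputable def errorProb (enc : M → A → ℝ) (K : A → B → ℝ) (dec : B → M → ℝ) : ℝ :=
  pushforward isDecoded (codeLaw enc K dec) false

lemma errorProb_eq_sum (enc : M → A → ℝ) (K : A → B → ℝ) (dec : B → M → ℝ) :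
    errorProb enc K dec = ∑ m, ∑ a, ∑ b, ∑ m',
      if m' = m then 0 else 1 / (Fintype.card M : ℝ) * enc m a * K a b * dec b m' := by
  simp [errorProb, pushforward, isDecoded, codeLaw, jointPMF, uniformPMF, Finset.sum_filter,
    Fintype.sum_prod_type]

lemma pushforward_isDecoded_codeLaw_const {enc : M → A → ℝ} (henc : ∀ m, IsPMF (enc m))
    {q : B → ℝ} (hq : IsPMF q) {dec : B → M → ℝ} (hdec : ∀ b, IsPMF (dec b)) :
    pushforward isDecoded (codeLaw enc (fun _ => q) dec) true = 1 / Fintype.card M := by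
  calc pushforward isDecoded (codeLaw enc (fun _ => q) dec) true
      = ∑ m, ∑ a, ∑ b, 1 / Fintype.card M * enc m a * q b * dec b m := by
        simp [pushforward, isDecoded, codeLaw, jointPMF, uniformPMF, Finset.sum_filter,
          Fintype.sum_prod_type]
    _ = 1 / Fintype.card M * ∑ m, (∑ a, enc m a) * ∑ b, q b * dec b m := by
        simp only [Finset.sum_mul_sum]
        simp only [Finset.mul_sum, mul_assoc]
    _ = 1 / Fintype.card M * ∑ b, q b * ∑ m, dec b m := by
        simp only [(henc _).2, one_mul, Finset.mul_sum]
        rw [Finset.sum_comm]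
    _ = 1 / Fintype.card M := by simp only [(hdec _).2, mul_one, hq.2]

theorem le_Igf_of_code [Nonempty M] (hf : ConvexOn ℝ (Set.Ici 0) f) (hf1 : f 1 = 0)
    (hGmono : MonotoneOn G (Set.Ici 0)) (hGconv : ConvexOn ℝ (Set.Ici 0) G) {enc : M → A → ℝ}
    (henc : ∀ m, IsPMF (enc m)) {K : A → B → ℝ} (hK : ∀ a, IsPMF (K a)) {dec : B → M → ℝ}
    (hdec : ∀ b, IsPMF (dec b)) :
    let N : ℝ := Fintype.card M
    let ε : ℝ := errorProb enc K dec
    G (1 / N * f (N * (1 - ε)) + (N - 1) / N * f (N * ε / (N - 1))) ≤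
      Igf G f (jointPMF (uniformPMF M) enc) fun z => K z.2 := by
  intro N ε
  have hinput := isPMF_uniformPMF.joint henc
  have : Nonempty B := hinput.nonempty.elim fun z => (hK z.2).nonempty
  refine le_Igf fun q hq hKq => ?_
  set P := codeLaw enc K dec
  set Q := codeLaw enc (fun _ => q) dec
  have hP : IsPMF P := isPMF_codeLaw henc hK hdec
  have hQ : IsPMF Q := isPMF_codeLaw henc (fun _ => hq) hdec
  have hPQ : AbsCont P Q := .joint (.joint (.refl _) fun _ => hKq _) fun _ => .refl _
  have hD (z : M × A) : 0 ≤ fDiv f (K z.2) q := fDiv_nonneg hf hf1 (hK _) hq (hKq z)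
  calc G (1 / N * f (N * (1 - ε)) + (N - 1) / N * f (N * ε / (N - 1)))
      = G (fDiv f (pushforward isDecoded P) (pushforward isDecoded Q)) := by
        rw [fDiv_bool_eq (hP.pushforward _) (hQ.pushforward _) (by simp)
          (pushforward_isDecoded_codeLaw_const henc hq hdec)]
        rfl
    _ ≤ G (fDiv f P Q) :=
        hGmono
          (fDiv_nonneg hf hf1 (hP.pushforward _) (hQ.pushforward _) (hPQ.pushforward hQ.1 _))
          (fDiv_nonneg hf hf1 hP hQ hPQ) (fDiv_pushforward_le hf hP.1 hQ.1 hPQ _)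
    _ = G (∑ z, jointPMF (uniformPMF M) enc z * fDiv f (K z.2) q) := by
        rw [fDiv_codeLaw henc (fun _ => hq) hdec]
    _ ≤ ∑ z, jointPMF (uniformPMF M) enc z * G (fDiv f (K z.2) q) :=
        hGconv.map_sum_le (fun z _ => hinput.1 z) hinput.2 fun z _ => hD z

end Codes

theorem finite_blocklength_converse_general
    {M : Type*} [Fintype M] [DecidableEq M] {n : ℕ} {X Y : Fin n → Type*}
    [∀ i, Fintype (X i)] [∀ i, Fintype (Y i)] {G f : ℝ → ℝ}
    (hf : ConvexOn ℝ (Set.Ici 0) f) (hf1 : f 1 = 0)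
    (hGmono : MonotoneOn G (Set.Ici 0)) (hGconv : ConvexOn ℝ (Set.Ici 0) G) (hG0 : G 0 = 0)
    (hsub : InfoSubadditive G f)
    {W : ∀ i, X i → Y i → ℝ} (hW : ∀ i x, IsPMF (W i x)) (hM : 2 ≤ Fintype.card M)
    {enc : M → (∀ i, X i) → ℝ} (henc : ∀ m, IsPMF (enc m))
    {dec : (∀ i, Y i) → M → ℝ} (hdec : ∀ y, IsPMF (dec y)) :
    let N : ℝ := Fintype.card M
    let ε : ℝ := errorProb enc (fun x y => ∏ i, W i (x i) (y i)) dec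
    G (1 / N * f (N * (1 - ε)) + (N - 1) / N * f (N * ε / (N - 1))) ≤
      ∑ i, gfCapacity G f (W i) := by
  classical
  intro N ε
  have : Nonempty M := Fintype.card_pos_iff.mp (by lia)
  have hG : ∀ t ∈ Set.Ici (0 : ℝ), 0 ≤ G t := fun t ht => hG0 ▸ hGmono Set.self_mem_Ici ht ht
  let p : M × (∀ i, X i) → ℝ := jointPMF (uniformPMF M) enc
  have hp : IsPMF p := isPMF_uniformPMF.joint henc
  calc G (1 / N * f (N * (1 - ε)) + (N - 1) / N * f (N * ε / (N - 1)))
      ≤ Igf G f p fun z (y : ∀ i, Y i) => ∏ i, W i (z.2 i) (y i) :=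
        le_Igf_of_code hf hf1 hGmono hGconv henc (fun x => isPMF_pi fun i => hW i (x i)) hdec
    _ ≤ ∑ i, Igf G f p fun z => W i (z.2 i) :=
        hsub.Igf_pi_le hf hf1 hG0 hG hp fun i z => hW i (z.2 i)
    _ ≤ ∑ i, Igf G f (pushforward (fun z => z.2 i) p) (W i) :=
        Finset.sum_le_sum fun i _ =>
          Igf_comp_le_Igf_pushforward hf hf1 hG hp (hW i) fun z => z.2 i
    _ ≤ ∑ i, gfCapacity G f (W i) :=
        Finset.sum_le_sum fun i _ => Igf_le_gfCapacity hf hf1 hG (hp.pushforward _) (hW i)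

/-- Finite-blocklength converse: for a uniform message sent over `n` uses of the
memoryless channel `W` with error probability `ε`, if `(G,f)` is information-subadditive
with `G` increasing and convex, then
`n · sup_{p_X} I_{G,f}(p_X, W) ≥ G((1/|𝓜|) f(|𝓜|(1−ε)) + ((|𝓜|−1)/|𝓜|) f(|𝓜|ε/(|𝓜|−1)))`. -/
theorem finite_blocklength_converse
    {X Y M : Type*} [Fintype X] [Fintype Y] [Fintype M] [DecidableEq M]
    (G f : ℝ → ℝ)
    (hf : ConvexOn ℝ (Set.Ici 0) f) (hf1 : f 1 = 0)
    (hGmono : StrictMonoOn G (Set.Ici 0)) (hGconv : ConvexOn ℝ (Set.Ici 0) G)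
    (hG0 : G 0 = 0) (hGnonneg : ∀ x ∈ Set.Ici (0 : ℝ), 0 ≤ G x)
    (hsub : InfoSubadditive G f)
    (W : X → Y → ℝ) (hW : ∀ x, IsPMF (W x))
    (n : ℕ) (hn : 1 ≤ n) (hM : 2 ≤ Fintype.card M)
    (pEnc : M → (Fin n → X) → ℝ) (hEnc : ∀ m, IsPMF (pEnc m))
    (pDec : (Fin n → Y) → M → ℝ) (hDec : ∀ yn, IsPMF (pDec yn)) :
    let N : ℝ := Fintype.card M
    let ε : ℝ := ∑ m : M, ∑ xn : Fin n → X, ∑ yn : Fin n → Y, ∑ m' : M,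
      (if m' = m then 0 else (1 / N) * pEnc m xn * (∏ i, W (xn i) (yn i)) * pDec yn m')
    (n : ℝ) * sSup {v : ℝ | ∃ pX : X → ℝ, IsPMF pX ∧ v = Igf G f pX W} ≥
      G ((1 / N) * f (N * (1 - ε)) + ((N - 1) / N) * f (N * ε / (N - 1))) := by
  intro N ε
  have h := finite_blocklength_converse_general hf hf1 hGmono.monotoneOn hGconv hG0 hsub
    (W := fun _ : Fin n => W) (fun _ => hW) hM hEnc hDec
  simpa [errorProb_eq_sum, gfCapacity, N, ε] using h
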